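/- The spider element sp = φ_a^i φ_{b₁}^i φ_{c₁}^i φ_a^i φ_{b₂}^i φ_{c₂}^i φ_a^i φ_{b₃}^i φ_{c₃}^i has order 40 in the reflection group R(L) of L = 3E₈⊕H. -/

import Mathlib

/- Formalization over the ring ℋ of Hurwitz integers inside the real quaternions. -/

noncomputable section
open Quaternion Finset

/-- The real quaternions ℍ. -/
abbrev Quat := Quaternion ℝ

/-- The quaternion `i`. -/
def qi : Quat := ⟨0, 1, 0, 0⟩
/-- The quaternion `j`. -/
def qj : Quat := ⟨0, 0, 1, 0⟩
/-- The quaternion `k`. -/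
def qk : Quat := ⟨0, 0, 0, 1⟩
/-- `p = 1 - i`. -/
def qp : Quat := 1 - qi

/-- A quaternion is a Hurwitz integer if it is `(a+bi+cj+dk)/2` with
`a,b,c,d` integers which are all congruent mod `2`. -/
def IsHurwitz (q : Quat) : Prop :=
  ∃ a b c d : ℤ, a % 2 = b % 2 ∧ b % 2 = c % 2 ∧ c % 2 = d % 2 ∧
    q = ⟨(a : ℝ) / 2, (b : ℝ) / 2, (c : ℝ) / 2, (d : ℝ) / 2⟩

/-- A unit of the ring ℋ of Hurwitz integers. -/
def IsUnitH (q : Quat) : Prop :=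
  IsHurwitz q ∧ ∃ r : Quat, IsHurwitz r ∧ q * r = 1 ∧ r * q = 1

/-- Membership in the (two-sided) ideal `pℋ`. -/
def InPH (q : Quat) : Prop := ∃ h : Quat, IsHurwitz h ∧ q = qp * h

/-- The ambient space of the lattice `L = 3E₈ ⊕ H`: three pairs (the `E₈` summands)
together with the two coordinates of the hyperbolic cell `H`. -/
abbrev V3 : Type := (Fin 3 → Quat × Quat) × Quat × Quat

/-- The ℋ-valued form on `3E₈ ⊕ H`:  negative definite standard form on each `E₈`
summand and the hyperbolic form `⟨(x₁,x₂),(y₁,y₂)⟩ = x̄₁ p̄ y₂ + x̄₂ p y₁` on `H`. -/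
def ip3 (x y : V3) : Quat :=
  (∑ s : Fin 3, (-(star (x.1 s).1 * (y.1 s).1) - star (x.1 s).2 * (y.1 s).2))
    + star x.2.1 * star qp * y.2.2 + star x.2.2 * qp * y.2.1

/-- Membership in the `E₈` lattice: both coordinates Hurwitz and congruent mod `pℋ`. -/
def memE8 (q : Quat × Quat) : Prop := IsHurwitz q.1 ∧ IsHurwitz q.2 ∧ InPH (q.1 - q.2)

/-- Membership in the lattice `L = 3E₈ ⊕ H`. -/
def memL3 (v : V3) : Prop := (∀ s, memE8 (v.1 s)) ∧ IsHurwitz v.2.1 ∧ IsHurwitz v.2.2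

/-- Right scalar multiplication on the ambient space of `3E₈ ⊕ H`. -/
def rmul3 (v : V3) (q : Quat) : V3 :=
  (fun s => ((v.1 s).1 * q, (v.1 s).2 * q), v.2.1 * q, v.2.2 * q)

/-- The `μ`-reflection in a root `r` : `v ↦ v − r(1−μ)⟨r,v⟩/|r|²`. -/
def refl3 (r : V3) (μ : Quat) (v : V3) : V3 := v - rmul3 r ((1 - μ) * ip3 r v / ip3 r r)

/-- The root `a` of the diagram `D`. -/
def rootA : V3 := (fun _ => (0, 0), 1, -1)
/-- The roots `c_s` of the diagram `D`. -/
def rootC (s : Fin 3) : V3 := (fun t => if t = s then ((1 : Quat), (-1 : Quat)) else 0, 0, 0)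
/-- The roots `e_s` of the diagram `D` (with `(1,1)` in the two other `E₈` slots). -/
def rootE (s : Fin 3) : V3 := (fun t => if t = s then (0 : Quat × Quat) else (1, 1), -qi, -1)
/-- The root `f` of the diagram `D`. -/
def rootF : V3 := (fun _ => (0, qp), -(qi * qp), -qp)
/-- The roots `b_s` of the diagram `D`. -/
def rootB (s : Fin 3) : V3 := (fun t => if t = s then ((0 : Quat), qp) else 0, -1, 0)
/-- The roots `d_s` of the diagram `D`. -/
def rootD (s : Fin 3) : V3 := (fun t => if t = s then (-qp, (0 : Quat)) else 0, 0, 0)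

/-- The set of roots of `L`. -/
def Roots3 : Set V3 := {r | memL3 r ∧ ip3 r r = -2}

/-- The reflection group `R(L)` of `L = 3E₈ ⊕ H`, as the subgroup of permutations of the
ambient space generated by the `μ`-reflections in all roots of `L` (for all units `μ ≠ 1`). -/
def RL3 : Subgroup (Equiv.Perm V3) :=
  Subgroup.closure {g | ∃ r μ, r ∈ Roots3 ∧ IsUnitH μ ∧ μ ≠ 1 ∧ ∀ v, g v = refl3 r μ v}

/-- The seven `points` of the diagram `D`. -/
def Pt : Fin 7 → V3 := ![rootA, rootC 0, rootC 1, rootC 2, rootE 0, rootE 1, rootE 2]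
/-- The seven `lines` of the diagram `D`. -/
def Ln : Fin 7 → V3 := ![rootF, rootB 0, rootB 1, rootB 2, rootD 0, rootD 1, rootD 2]

/-- The spider element `sp = φ_a^i φ_{b₁}^i φ_{c₁}^i φ_a^i φ_{b₂}^i φ_{c₂}^i φ_a^i φ_{b₃}^i φ_{c₃}^i`. -/
def sp : V3 → V3 :=
  refl3 rootA qi ∘ refl3 (rootB 0) qi ∘ refl3 (rootC 0) qi ∘
  refl3 rootA qi ∘ refl3 (rootB 1) qi ∘ refl3 (rootC 1) qi ∘
  refl3 rootA qi ∘ refl3 (rootB 2) qi ∘ refl3 (rootC 2) qi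

lemma spV_ext {v w : V3} (h0 : (v.1 0).1 = (w.1 0).1) (h1 : (v.1 0).2 = (w.1 0).2)
    (h2 : (v.1 1).1 = (w.1 1).1) (h3 : (v.1 1).2 = (w.1 1).2)
    (h4 : (v.1 2).1 = (w.1 2).1) (h5 : (v.1 2).2 = (w.1 2).2)
    (h6 : v.2.1 = w.2.1) (h7 : v.2.2 = w.2.2) : v = w := by
  refine Prod.ext (funext fun s => ?_) (Prod.ext h6 h7)
  fin_cases s
  · exact Prod.ext h0 h1
  · exact Prod.ext h2 h3
  · exact Prod.ext h4 h5

/-- Coordinates with respect to a basis of the lattice. -/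
def spT (y0 y1 y2 y3 y4 y5 y6 y7 : Quat) : V3 :=
  (![(y0, y0 + qp * y1), (y2, y2 + qp * y3), (y4, y4 + qp * y5)], y6, y7)

@[simp] lemma qi_re : qi.re = 0 := rfl
@[simp] lemma qi_imI : qi.imI = 1 := rfl
@[simp] lemma qi_imJ : qi.imJ = 0 := rfl
@[simp] lemma qi_imK : qi.imK = 0 := rfl
@[simp] lemma qp_re : qp.re = 1 := by simp [qp]
@[simp] lemma qp_imI : qp.imI = -1 := by simp [qp]
@[simp] lemma qp_imJ : qp.imJ = 0 := by simp [qp]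
@[simp] lemma qp_imK : qp.imK = 0 := by simp [qp]

lemma two_quat : (2 : Quat) = ((2 : ℝ) : Quat) := by
  rw [← one_add_one_eq_two, ← one_add_one_eq_two, Quaternion.coe_add, Quaternion.coe_one]

lemma div_two_quat (q : Quat) : q / (-2) = (-1 / 2 : ℝ) • q := by
  have h : ((-2 : Quat)) = ((-2 : ℝ) : Quat) := by rw [Quaternion.coe_neg, two_quat]
  rw [h, div_eq_mul_inv, ← Quaternion.coe_inv, Quaternion.mul_coe_eq_smul]
  norm_num

lemma refl_eq {r v w : V3} (q : Quat) (hn : ip3 r r = -2)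
    (hq : (1 - qi) * ip3 r v / (-2) = q)
    (h0 : (v.1 0).1 - (r.1 0).1 * q = (w.1 0).1) (h1 : (v.1 0).2 - (r.1 0).2 * q = (w.1 0).2)
    (h2 : (v.1 1).1 - (r.1 1).1 * q = (w.1 1).1) (h3 : (v.1 1).2 - (r.1 1).2 * q = (w.1 1).2)
    (h4 : (v.1 2).1 - (r.1 2).1 * q = (w.1 2).1) (h5 : (v.1 2).2 - (r.1 2).2 * q = (w.1 2).2)
    (h6 : v.2.1 - r.2.1 * q = w.2.1) (h7 : v.2.2 - r.2.2 * q = w.2.2) :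
    refl3 r qi v = w := by
  unfold refl3
  rw [hn, hq]
  exact spV_ext h0 h1 h2 h3 h4 h5 h6 h7

lemma rootAN : ip3 rootA rootA = -2 := by
  ext <;> simp [ip3, rootA, Fin.sum_univ_three, two_quat] <;> norm_num

lemma rootBN (s : Fin 3) : ip3 (rootB s) (rootB s) = -2 := by
  fin_cases s <;> ext <;> simp [ip3, rootB, Fin.sum_univ_three, two_quat] <;> norm_num

lemma rootCN (s : Fin 3) : ip3 (rootC s) (rootC s) = -2 := by
  fin_cases s <;> ext <;> simp [ip3, rootC, Fin.sum_univ_three, two_quat] <;> norm_num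

lemma stepA (y0 y1 y2 y3 y4 y5 y6 y7 : Quat) :
    refl3 (rootA) qi (spT y0 y1 y2 y3 y4 y5 y6 y7) =
      spT y0 y1 y2 y3 y4 y5 ((1 + qi) * y6 + y7) (-qi * y6) := by
  refine refl_eq (-y7 - qi * y6) (by simp only [rootAN]) ?_ ?_ ?_ ?_ ?_ ?_ ?_ ?_ ?_
  · rw [div_two_quat]
    ext <;> simp [spT, ip3, rootA, Fin.sum_univ_three] <;> try ring
  all_goals simp only [spT, rootA]
  all_goals ext <;> simp <;> try ring

lemma stepB0 (y0 y1 y2 y3 y4 y5 y6 y7 : Quat) :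
    refl3 (rootB 0) qi (spT y0 y1 y2 y3 y4 y5 y6 y7) =
      spT y0 (-y0 + qi * y1 - y7) y2 y3 y4 y5 (y0 + (1 - qi) * y1 + y6 + y7) y7 := by
  refine refl_eq (y0 + (1 - qi) * y1 + y7) (by simp only [rootBN]) ?_ ?_ ?_ ?_ ?_ ?_ ?_ ?_ ?_
  · rw [div_two_quat]
    ext <;> simp [spT, ip3, rootB, Fin.sum_univ_three] <;> try ring
  all_goals simp only [spT, rootB]
  all_goals ext <;> simp <;> try ring

lemma stepB1 (y0 y1 y2 y3 y4 y5 y6 y7 : Quat) :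
    refl3 (rootB 1) qi (spT y0 y1 y2 y3 y4 y5 y6 y7) =
      spT y0 y1 y2 (-y2 + qi * y3 - y7) y4 y5 (y2 + (1 - qi) * y3 + y6 + y7) y7 := by
  refine refl_eq (y2 + (1 - qi) * y3 + y7) (by simp only [rootBN]) ?_ ?_ ?_ ?_ ?_ ?_ ?_ ?_ ?_
  · rw [div_two_quat]
    ext <;> simp [spT, ip3, rootB, Fin.sum_univ_three] <;> try ring
  all_goals simp only [spT, rootB]
  all_goals ext <;> simp <;> try ring

lemma stepB2 (y0 y1 y2 y3 y4 y5 y6 y7 : Quat) :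
    refl3 (rootB 2) qi (spT y0 y1 y2 y3 y4 y5 y6 y7) =
      spT y0 y1 y2 y3 y4 (-y4 + qi * y5 - y7) (y4 + (1 - qi) * y5 + y6 + y7) y7 := by
  refine refl_eq (y4 + (1 - qi) * y5 + y7) (by simp only [rootBN]) ?_ ?_ ?_ ?_ ?_ ?_ ?_ ?_ ?_
  · rw [div_two_quat]
    ext <;> simp [spT, ip3, rootB, Fin.sum_univ_three] <;> try ring
  all_goals simp only [spT, rootB]
  all_goals ext <;> simp <;> try ring

lemma stepC0 (y0 y1 y2 y3 y4 y5 y6 y7 : Quat) :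
    refl3 (rootC 0) qi (spT y0 y1 y2 y3 y4 y5 y6 y7) =
      spT (y0 - qi * y1) (qi * y1) y2 y3 y4 y5 y6 y7 := by
  refine refl_eq (qi * y1) (by simp only [rootCN]) ?_ ?_ ?_ ?_ ?_ ?_ ?_ ?_ ?_
  · rw [div_two_quat]
    ext <;> simp [spT, ip3, rootC, Fin.sum_univ_three] <;> try ring
  all_goals simp only [spT, rootC]
  all_goals ext <;> simp <;> try ring

lemma stepC1 (y0 y1 y2 y3 y4 y5 y6 y7 : Quat) :
    refl3 (rootC 1) qi (spT y0 y1 y2 y3 y4 y5 y6 y7) =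
      spT y0 y1 (y2 - qi * y3) (qi * y3) y4 y5 y6 y7 := by
  refine refl_eq (qi * y3) (by simp only [rootCN]) ?_ ?_ ?_ ?_ ?_ ?_ ?_ ?_ ?_
  · rw [div_two_quat]
    ext <;> simp [spT, ip3, rootC, Fin.sum_univ_three] <;> try ring
  all_goals simp only [spT, rootC]
  all_goals ext <;> simp <;> try ring

lemma stepC2 (y0 y1 y2 y3 y4 y5 y6 y7 : Quat) :
    refl3 (rootC 2) qi (spT y0 y1 y2 y3 y4 y5 y6 y7) =
      spT y0 y1 y2 y3 (y4 - qi * y5) (qi * y5) y6 y7 := by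
  refine refl_eq (qi * y5) (by simp only [rootCN]) ?_ ?_ ?_ ?_ ?_ ?_ ?_ ?_ ?_
  · rw [div_two_quat]
    ext <;> simp [spT, ip3, rootC, Fin.sum_univ_three] <;> try ring
  all_goals simp only [spT, rootC]
  all_goals ext <;> simp <;> try ring

def spM1 : Matrix (Fin 8) (Fin 8) GaussianInt :=
  !![⟨1,0⟩, ⟨0,-1⟩, ⟨0,0⟩, ⟨0,0⟩, ⟨0,0⟩, ⟨0,0⟩, ⟨0,0⟩, ⟨0,0⟩;
    ⟨-1,0⟩, ⟨-1,1⟩, ⟨0,1⟩, ⟨0,1⟩, ⟨0,1⟩, ⟨0,1⟩, ⟨0,1⟩, ⟨0,2⟩;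
    ⟨0,0⟩, ⟨0,0⟩, ⟨1,0⟩, ⟨0,-1⟩, ⟨0,0⟩, ⟨0,0⟩, ⟨0,0⟩, ⟨0,0⟩;
    ⟨0,0⟩, ⟨0,0⟩, ⟨-1,0⟩, ⟨-1,1⟩, ⟨0,1⟩, ⟨0,1⟩, ⟨0,1⟩, ⟨0,1⟩;
    ⟨0,0⟩, ⟨0,0⟩, ⟨0,0⟩, ⟨0,0⟩, ⟨1,0⟩, ⟨0,-1⟩, ⟨0,0⟩, ⟨0,0⟩;
    ⟨0,0⟩, ⟨0,0⟩, ⟨0,0⟩, ⟨0,0⟩, ⟨-1,0⟩, ⟨-1,1⟩, ⟨0,0⟩, ⟨-1,0⟩;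
    ⟨1,1⟩, ⟨1,1⟩, ⟨1,0⟩, ⟨1,0⟩, ⟨2,-1⟩, ⟨2,-1⟩, ⟨2,-1⟩, ⟨3,-1⟩;
    ⟨0,-1⟩, ⟨0,-1⟩, ⟨0,-1⟩, ⟨0,-1⟩, ⟨-1,-1⟩, ⟨-1,-1⟩, ⟨-1,-1⟩, ⟨-1,-2⟩]

def spM2 : Matrix (Fin 8) (Fin 8) GaussianInt :=
  !![⟨1,1⟩, ⟨1,0⟩, ⟨1,0⟩, ⟨1,0⟩, ⟨1,0⟩, ⟨1,0⟩, ⟨1,0⟩, ⟨2,0⟩;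
    ⟨1,0⟩, ⟨1,0⟩, ⟨1,0⟩, ⟨1,-1⟩, ⟨1,-1⟩, ⟨1,-2⟩, ⟨1,-1⟩, ⟨2,-2⟩;
    ⟨0,0⟩, ⟨0,0⟩, ⟨1,1⟩, ⟨1,0⟩, ⟨1,0⟩, ⟨1,0⟩, ⟨1,0⟩, ⟨1,0⟩;
    ⟨0,1⟩, ⟨0,1⟩, ⟨1,0⟩, ⟨1,0⟩, ⟨1,0⟩, ⟨1,-1⟩, ⟨1,0⟩, ⟨2,0⟩;
    ⟨0,0⟩, ⟨0,0⟩, ⟨0,0⟩, ⟨0,0⟩, ⟨1,1⟩, ⟨1,0⟩, ⟨0,0⟩, ⟨0,1⟩;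
    ⟨0,1⟩, ⟨0,1⟩, ⟨0,1⟩, ⟨0,1⟩, ⟨1,0⟩, ⟨1,0⟩, ⟨1,1⟩, ⟨2,1⟩;
    ⟨2,-2⟩, ⟨1,-3⟩, ⟨0,-3⟩, ⟨-1,-3⟩, ⟨-2,-4⟩, ⟨-4,-3⟩, ⟨-2,-4⟩, ⟨-4,-6⟩;
    ⟨-2,-1⟩, ⟨-2,0⟩, ⟨-2,0⟩, ⟨-2,1⟩, ⟨-2,2⟩, ⟨-1,3⟩, ⟨-2,2⟩, ⟨-3,3⟩]

def spM4 : Matrix (Fin 8) (Fin 8) GaussianInt :=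
  !![⟨-1,0⟩, ⟨-1,0⟩, ⟨0,0⟩, ⟨-1,0⟩, ⟨0,1⟩, ⟨0,1⟩, ⟨-1,1⟩, ⟨-1,2⟩;
    ⟨-1,1⟩, ⟨-1,2⟩, ⟨-1,2⟩, ⟨0,3⟩, ⟨1,2⟩, ⟨2,2⟩, ⟨1,3⟩, ⟨2,4⟩;
    ⟨0,-1⟩, ⟨-1,-1⟩, ⟨-1,0⟩, ⟨-1,0⟩, ⟨0,0⟩, ⟨-1,0⟩, ⟨-1,0⟩, ⟨-2,0⟩;
    ⟨-2,0⟩, ⟨-2,1⟩, ⟨-1,1⟩, ⟨-1,2⟩, ⟨-1,2⟩, ⟨0,3⟩, ⟨-1,2⟩, ⟨-2,4⟩;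
    ⟨1,-1⟩, ⟨0,-1⟩, ⟨0,-1⟩, ⟨-1,-1⟩, ⟨-1,0⟩, ⟨-1,0⟩, ⟨-1,-1⟩, ⟨-2,-1⟩;
    ⟨-1,-1⟩, ⟨-1,-1⟩, ⟨-2,0⟩, ⟨-2,1⟩, ⟨-1,1⟩, ⟨-1,2⟩, ⟨-2,1⟩, ⟨-3,2⟩;
    ⟨1,4⟩, ⟨3,4⟩, ⟨4,3⟩, ⟨6,2⟩, ⟨5,-1⟩, ⟨5,-3⟩, ⟨6,1⟩, ⟨11,1⟩;
    ⟨2,-1⟩, ⟨2,-2⟩, ⟨1,-3⟩, ⟨0,-4⟩, ⟨-1,-3⟩, ⟨-2,-3⟩, ⟨0,-4⟩, ⟨-1,-7⟩]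

def spM5 : Matrix (Fin 8) (Fin 8) GaussianInt :=
  !![⟨0,1⟩, ⟨1,1⟩, ⟨2,1⟩, ⟨2,0⟩, ⟨2,0⟩, ⟨2,-1⟩, ⟨2,0⟩, ⟨3,0⟩;
    ⟨2,1⟩, ⟨2,0⟩, ⟨2,-1⟩, ⟨2,-2⟩, ⟨1,-2⟩, ⟨0,-3⟩, ⟨2,-2⟩, ⟨3,-4⟩;
    ⟨0,1⟩, ⟨0,1⟩, ⟨0,1⟩, ⟨1,1⟩, ⟨2,1⟩, ⟨2,0⟩, ⟨1,1⟩, ⟨2,2⟩;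
    ⟨1,2⟩, ⟨2,2⟩, ⟨2,1⟩, ⟨2,0⟩, ⟨2,-1⟩, ⟨2,-2⟩, ⟨3,0⟩, ⟨5,-1⟩;
    ⟨0,0⟩, ⟨-1,0⟩, ⟨0,1⟩, ⟨0,1⟩, ⟨0,1⟩, ⟨1,1⟩, ⟨0,1⟩, ⟨0,2⟩;
    ⟨-1,2⟩, ⟨0,3⟩, ⟨1,2⟩, ⟨2,2⟩, ⟨2,1⟩, ⟨2,0⟩, ⟨2,2⟩, ⟨4,3⟩;
    ⟨4,-4⟩, ⟨3,-6⟩, ⟨1,-6⟩, ⟨-2,-7⟩, ⟨-3,-5⟩, ⟨-6,-4⟩, ⟨-3,-7⟩, ⟨-5,-11⟩;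
    ⟨-3,-2⟩, ⟨-4,-1⟩, ⟨-4,0⟩, ⟨-4,2⟩, ⟨-3,2⟩, ⟨-2,4⟩, ⟨-4,2⟩, ⟨-7,4⟩]

def spM8 : Matrix (Fin 8) (Fin 8) GaussianInt :=
  !![⟨1,1⟩, ⟨1,1⟩, ⟨1,1⟩, ⟨2,0⟩, ⟨2,0⟩, ⟨2,-1⟩, ⟨2,0⟩, ⟨3,0⟩;
    ⟨2,1⟩, ⟨3,0⟩, ⟨2,-1⟩, ⟨1,-2⟩, ⟨1,-2⟩, ⟨0,-3⟩, ⟨2,-2⟩, ⟨3,-4⟩;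
    ⟨0,1⟩, ⟨0,1⟩, ⟨1,1⟩, ⟨1,1⟩, ⟨1,1⟩, ⟨2,0⟩, ⟨1,1⟩, ⟨2,2⟩;
    ⟨1,2⟩, ⟨2,2⟩, ⟨2,1⟩, ⟨3,0⟩, ⟨2,-1⟩, ⟨1,-2⟩, ⟨3,0⟩, ⟨5,-1⟩;
    ⟨-1,1⟩, ⟨-1,1⟩, ⟨0,1⟩, ⟨0,1⟩, ⟨1,1⟩, ⟨1,1⟩, ⟨0,2⟩, ⟨1,3⟩;
    ⟨0,2⟩, ⟨1,3⟩, ⟨1,2⟩, ⟨2,2⟩, ⟨2,1⟩, ⟨3,0⟩, ⟨3,2⟩, ⟨5,2⟩;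
    ⟨4,-5⟩, ⟨2,-7⟩, ⟨1,-6⟩, ⟨-2,-7⟩, ⟨-3,-5⟩, ⟨-6,-4⟩, ⟨-2,-8⟩, ⟨-6,-13⟩;
    ⟨-3,-2⟩, ⟨-4,-1⟩, ⟨-4,0⟩, ⟨-4,2⟩, ⟨-3,2⟩, ⟨-2,4⟩, ⟨-5,2⟩, ⟨-7,5⟩]

def spM10 : Matrix (Fin 8) (Fin 8) GaussianInt :=
  !![⟨0,0⟩, ⟨-1,0⟩, ⟨-1,0⟩, ⟨-1,1⟩, ⟨0,1⟩, ⟨0,1⟩, ⟨-1,1⟩, ⟨-1,2⟩;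
    ⟨-1,1⟩, ⟨0,2⟩, ⟨0,2⟩, ⟨1,2⟩, ⟨1,1⟩, ⟨2,1⟩, ⟨1,2⟩, ⟨2,3⟩;
    ⟨0,-1⟩, ⟨-1,-1⟩, ⟨0,0⟩, ⟨-1,0⟩, ⟨-1,0⟩, ⟨-1,1⟩, ⟨-1,0⟩, ⟨-2,0⟩;
    ⟨-2,0⟩, ⟨-2,1⟩, ⟨-1,1⟩, ⟨0,2⟩, ⟨0,2⟩, ⟨1,2⟩, ⟨-1,2⟩, ⟨-1,4⟩;
    ⟨0,-1⟩, ⟨0,-1⟩, ⟨0,-1⟩, ⟨-1,-1⟩, ⟨0,0⟩, ⟨-1,0⟩, ⟨-1,-1⟩, ⟨-2,-1⟩;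
    ⟨-1,-1⟩, ⟨-2,-1⟩, ⟨-2,0⟩, ⟨-2,1⟩, ⟨-1,1⟩, ⟨0,2⟩, ⟨-2,1⟩, ⟨-3,2⟩;
    ⟨1,4⟩, ⟨3,4⟩, ⟨3,2⟩, ⟨5,1⟩, ⟨4,-1⟩, ⟨4,-3⟩, ⟨6,1⟩, ⟨9,0⟩;
    ⟨2,-1⟩, ⟨2,-2⟩, ⟨1,-2⟩, ⟨0,-3⟩, ⟨-1,-2⟩, ⟨-2,-2⟩, ⟨0,-3⟩, ⟨0,-5⟩]

def spM20 : Matrix (Fin 8) (Fin 8) GaussianInt :=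
  !![⟨0,-1⟩, ⟨-1,-1⟩, ⟨-1,-1⟩, ⟨-2,0⟩, ⟨-1,1⟩, ⟨-1,1⟩, ⟨-2,0⟩, ⟨-3,1⟩;
    ⟨-2,0⟩, ⟨-2,1⟩, ⟨-2,2⟩, ⟨-1,3⟩, ⟨0,2⟩, ⟨1,3⟩, ⟨-1,3⟩, ⟨-1,5⟩;
    ⟨1,-1⟩, ⟨0,-2⟩, ⟨0,-1⟩, ⟨-1,-1⟩, ⟨-1,-1⟩, ⟨-2,0⟩, ⟨-1,-1⟩, ⟨-2,-2⟩;
    ⟨-2,-2⟩, ⟨-3,-1⟩, ⟨-2,0⟩, ⟨-2,1⟩, ⟨-2,2⟩, ⟨-1,3⟩, ⟨-3,1⟩, ⟨-5,3⟩;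
    ⟨1,-1⟩, ⟨1,-1⟩, ⟨1,-1⟩, ⟨0,-2⟩, ⟨0,-1⟩, ⟨-1,-1⟩, ⟨0,-2⟩, ⟨-1,-3⟩;
    ⟨0,-2⟩, ⟨-1,-3⟩, ⟨-2,-2⟩, ⟨-3,-1⟩, ⟨-2,0⟩, ⟨-2,1⟩, ⟨-3,-1⟩, ⟨-5,-1⟩;
    ⟨-3,5⟩, ⟨-1,7⟩, ⟨1,5⟩, ⟨4,6⟩, ⟨5,3⟩, ⟨7,1⟩, ⟨5,6⟩, ⟨9,9⟩;
    ⟨3,1⟩, ⟨4,0⟩, ⟨3,-1⟩, ⟨3,-3⟩, ⟨1,-3⟩, ⟨0,-4⟩, ⟨3,-3⟩, ⟨5,-6⟩]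

/-- The embedding of the Gaussian integers in the quaternions. -/
def gq : GaussianInt →+* Quat :=
  (Quaternion.ofComplex : ℂ →ₐ[ℝ] Quat).toRingHom.comp GaussianInt.toComplex

lemma gq_mk (a b : ℤ) : gq ⟨a, b⟩ = (a : Quat) + (b : Quat) * qi := by
  ext <;> simp [gq, GaussianInt.toComplex_def]

def spW (y : Fin 8 → Quat) : V3 := spT (y 0) (y 1) (y 2) (y 3) (y 4) (y 5) (y 6) (y 7)

lemma spM1_mulVec (y : Fin 8 → Quat) : (spM1.map gq).mulVec y =
    ![(1 + (0) * qi) * y 0 + (0 + (-1) * qi) * y 1,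
      (-1 + (0) * qi) * y 0 + (-1 + (1) * qi) * y 1 + (0 + (1) * qi) * y 2 + (0 + (1) * qi) * y 3 + (0 + (1) * qi) * y 4 + (0 + (1) * qi) * y 5 + (0 + (1) * qi) * y 6 + (0 + (2) * qi) * y 7,
      (1 + (0) * qi) * y 2 + (0 + (-1) * qi) * y 3,
      (-1 + (0) * qi) * y 2 + (-1 + (1) * qi) * y 3 + (0 + (1) * qi) * y 4 + (0 + (1) * qi) * y 5 + (0 + (1) * qi) * y 6 + (0 + (1) * qi) * y 7,
      (1 + (0) * qi) * y 4 + (0 + (-1) * qi) * y 5,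
      (-1 + (0) * qi) * y 4 + (-1 + (1) * qi) * y 5 + (-1 + (0) * qi) * y 7,
      (1 + (1) * qi) * y 0 + (1 + (1) * qi) * y 1 + (1 + (0) * qi) * y 2 + (1 + (0) * qi) * y 3 + (2 + (-1) * qi) * y 4 + (2 + (-1) * qi) * y 5 + (2 + (-1) * qi) * y 6 + (3 + (-1) * qi) * y 7,
      (0 + (-1) * qi) * y 0 + (0 + (-1) * qi) * y 1 + (0 + (-1) * qi) * y 2 + (0 + (-1) * qi) * y 3 + (-1 + (-1) * qi) * y 4 + (-1 + (-1) * qi) * y 5 + (-1 + (-1) * qi) * y 6 + (-1 + (-2) * qi) * y 7] := by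
  ext1 s
  fin_cases s <;>
  simp [Matrix.mulVec, dotProduct, Fin.sum_univ_eight, spM1, gq_mk]

lemma sp_spW (y : Fin 8 → Quat) : sp (spW y) = spW ((spM1.map gq).mulVec y) := by
  rw [spM1_mulVec]
  simp only [sp, Function.comp_apply, spW, stepA, stepB0, stepB1, stepB2, stepC0, stepC1, stepC2]
  have hq : qi * qi = -1 := by ext <;> simp
  have hq2 : ∀ z : Quat, qi * (qi * z) = -z := fun z => by rw [← mul_assoc, hq, neg_one_mul]
  congr 1 <;> simp [mul_add, add_mul, mul_sub, sub_mul, mul_assoc, hq2, two_mul] <;> noncomm_ring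

lemma spM2_eq : spM2 = spM1 * spM1 := by decide +kernel
lemma spM4_eq : spM4 = spM2 * spM2 := by decide +kernel
lemma spM5_eq : spM5 = spM4 * spM1 := by decide +kernel
lemma spM8_eq : spM8 = spM4 * spM4 := by decide +kernel
lemma spM10_eq : spM10 = spM5 * spM5 := by decide +kernel
lemma spM20_eq : spM20 = spM10 * spM10 := by decide +kernel
lemma spM40_eq : 1 = spM20 * spM20 := by decide +kernel

lemma sp_iter (n : ℕ) (y : Fin 8 → Quat) :
    sp^[n] (spW y) = spW (((spM1 ^ n).map gq).mulVec y) := by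
  induction n generalizing y with
  | zero => simp
  | succ n ih =>
    rw [Function.iterate_succ_apply, sp_spW, ih, Matrix.mulVec_mulVec, ← Matrix.map_mul, pow_succ]

lemma spW_surj (v : V3) : ∃ y, spW y = v := by
  have hp : qp * ((1 / 2 : ℝ) • (1 + qi)) = 1 := by
    ext <;> simp <;> norm_num
  have hp2 : ∀ z : Quat, qp * (((1 / 2 : ℝ) • (1 + qi)) * z) = z := fun z => by
    rw [← mul_assoc, hp, one_mul]
  generalize ((1 / 2 : ℝ) • (1 + qi) : Quat) = t at hp2
  refine ⟨![(v.1 0).1, t * ((v.1 0).2 - (v.1 0).1), (v.1 1).1, t * ((v.1 1).2 - (v.1 1).1),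
    (v.1 2).1, t * ((v.1 2).2 - (v.1 2).1), v.2.1, v.2.2], ?_⟩
  refine spV_ext ?_ ?_ ?_ ?_ ?_ ?_ ?_ ?_ <;> simp [spW, spT, hp2]

lemma spW_inj {y z : Fin 8 → Quat} (h : spW y = spW z) : y = z := by
  have hp : qp ≠ 0 := fun h => by
    have := congrArg (fun q : Quat => q.re) h
    simp at this
  simp only [spW, spT, Prod.mk.injEq] at h
  obtain ⟨h1, h6, h7⟩ := h
  have e0 := congrFun h1 0
  have e1 := congrFun h1 1
  have e2 := congrFun h1 2
  simp at e0 e1 e2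
  obtain ⟨a0, b0⟩ := e0
  obtain ⟨a1, b1⟩ := e1
  obtain ⟨a2, b2⟩ := e2
  simp [a0, hp] at b0
  simp [a1, hp] at b1
  simp [a2, hp] at b2
  ext1 s
  fin_cases s <;> assumption

lemma gq_inj : Function.Injective gq := by
  rintro ⟨a, b⟩ ⟨c, d⟩ h
  rw [gq_mk, gq_mk] at h
  have h1 := congrArg (fun q : Quat => q.re) h
  have h2 := congrArg (fun q : Quat => q.imI) h
  simp at h1 h2
  rw [h1, h2]

lemma sp_pow_eq_one {m : ℕ} (h : ∀ v, sp^[m] v = v) : spM1 ^ m = 1 := by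
  have h1 : ∀ y, ((spM1 ^ m).map gq).mulVec y = y := fun y =>
    spW_inj (by rw [← sp_iter]; exact h _)
  ext1 i j
  apply gq_inj
  have := congrFun (h1 (Pi.single j 1)) i
  simp only [Matrix.mulVec_single_one, Matrix.col_apply, Matrix.map_apply] at this
  rw [this, Matrix.one_apply, Pi.single_apply]
  split_ifs <;> simp

lemma spM1_order : orderOf spM1 = 40 := by
  have h4 : spM1 ^ 4 = spM4 := by rw [spM4_eq, spM2_eq]; noncomm_ring
  have h8 : spM1 ^ 8 = spM8 := by rw [spM8_eq, ← h4, ← pow_add]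
  have h5 : spM1 ^ 5 = spM5 := by rw [spM5_eq, ← h4, ← pow_succ]
  have h20 : spM1 ^ 20 = spM20 := by rw [spM20_eq, spM10_eq, ← h5, ← pow_add, ← pow_add]
  have h40 : spM1 ^ 40 = 1 := by rw [spM40_eq, ← h20, ← pow_add]
  apply orderOf_eq_of_pow_and_pow_div_prime (by norm_num) h40
  intro p hp hd
  have hp' : p = 2 ∨ p = 5 := by
    have : p ∣ 2 ^ 3 * 5 := by simpa using hd
    rcases (Nat.Prime.dvd_mul hp).1 this with h | h
    · exact Or.inl ((Nat.prime_dvd_prime_iff_eq hp Nat.prime_two).1 (hp.dvd_of_dvd_pow h))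
    · exact Or.inr ((Nat.prime_dvd_prime_iff_eq hp Nat.prime_five).1 h)
  rcases hp' with rfl | rfl
  · norm_num only [h20]; decide +kernel
  · norm_num only [h8]; decide +kernel

/-- The spider element has order 40. -/
theorem spider_has_order_forty :
    (∀ v, sp^[40] v = v) ∧ ∀ m : ℕ, 0 < m → m < 40 → ∃ v, sp^[m] v ≠ v := by
  constructor
  · intro v
    obtain ⟨y, rfl⟩ := spW_surj v
    rw [sp_iter, ← spM1_order, pow_orderOf_eq_one]
    simp
  · intro m h0 h1
    by_contra! h
    have := orderOf_le_of_pow_eq_one h0 (sp_pow_eq_one h)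
    rw [spM1_order] at this
    omega
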